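/- The algebra E_0(P_n) of linear operators on P_n generated by all V_{x,y} (x,y ∈ P_n), where uV_{x,y} = (xu)y, is isomorphic to the full matrix algebra M_n(F). -/

import Mathlib

inductive PBasis (n : ℕ) : Type
  | a : Fin n → Fin n → PBasis n
  | b : Fin n → Fin n → PBasis n
  | c : Fin n → PBasis n
  | d : Fin n → Fin n → PBasis n
  | e : Fin n → Fin n → PBasis n
  deriving DecidableEq

abbrev Pn (F : Type*) [Field F] (n : ℕ) : Type _ := PBasis n →₀ F

open PBasis in
noncomputable def mulB (F : Type*) [Field F] {n : ℕ} : PBasis n → PBasis n → Pn F n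
  | a i j, c k => if k = i then Finsupp.single (d i j) 1 else 0
  | b i j, c k => if k = i then Finsupp.single (e i j) 1 else 0
  | a i j, e k l => if i = k ∧ j = l then Finsupp.single (c j) 1 else 0
  | e k l, a i j => if i = k ∧ j = l then Finsupp.single (c j) 1 else 0
  | b i j, d k l => if i = k ∧ j = l then -Finsupp.single (c j) 1 else 0
  | d k l, b i j => if i = k ∧ j = l then -Finsupp.single (c j) 1 else 0
  | _, _ => 0

noncomputable def mulLin (F : Type*) [Field F] {n : ℕ} :
    Pn F n →ₗ[F] Pn F n →ₗ[F] Pn F n :=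
  Finsupp.lift (Pn F n →ₗ[F] Pn F n) F (PBasis n)
    (fun u => Finsupp.lift (Pn F n) F (PBasis n) (fun v => mulB F u v))

noncomputable instance (F : Type*) [Field F] (n : ℕ) : Mul (Pn F n) :=
  ⟨fun x y => mulLin F x y⟩

noncomputable def Vop (F : Type*) [Field F] {n : ℕ} (x y : Pn F n) :
    Module.End F (Pn F n) :=
  ((mulLin F).flip y).comp (mulLin F x)

/-!
Each `c k` is a left annihilator and `x u ∈ span {c i}` for every basis vector `u` that is not some
`c k`, so `V_{x,y}` kills all of these `u`. For `u = c k` one has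
`x c_k = ∑ j, (x_{a k j} d_{k j} + x_{b k j} e_{k j})`, and multiplying by `y` gives
`∑ j, (x_{b k j} y_{a k j} - x_{a k j} y_{b k j}) c_j`. Hence `V_{x,y}` is a matrix acting on
`span {c i}`, extended by zero. With `y = ∑ a_{i j}` and `x` supported on the `b_{i j}` every matrix
occurs, so the operators `V_{x,y}` already form an algebra, isomorphic to that of all matrices.
-/

section RangeInverse

variable {R A B : Type*} [CommSemiring R] [NonUnitalNonAssocSemiring A] [Module R A]
  [NonUnitalNonAssocSemiring B] [Module R B]

/-- The inverse of an injective non-unital algebra homomorphism on its range. -/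
noncomputable def nonUnitalRangeInverse (φ : A →ₙₐ[R] B) (hφ : Function.Injective φ) :
    NonUnitalAlgHom.range φ →ₙₐ[R] A :=
  (NonUnitalAlgHom.rangeRestrict φ).inverse (Equiv.ofInjective φ hφ).symm
    (Equiv.ofInjective φ hφ).left_inv (Equiv.ofInjective φ hφ).right_inv

theorem nonUnitalRangeInverse_bijective (φ : A →ₙₐ[R] B) (hφ : Function.Injective φ) :
    Function.Bijective (nonUnitalRangeInverse φ hφ) :=
  (Equiv.ofInjective φ hφ).symm.bijective

end RangeInverse

section Retraction

variable {R M N : Type*} [CommSemiring R] [AddCommMonoid M] [Module R M] [AddCommMonoid N]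
  [Module R N]

/-- The non-unital algebra embedding `f ↦ i ∘ f ∘ p` of endomorphism algebras attached to a
retraction `p` of `i : M → N`; it extends `f` by zero on the kernel of `p`. -/
def endOfLeftInverse (i : M →ₗ[R] N) (p : N →ₗ[R] M) (h : Function.LeftInverse p i) :
    Module.End R M →ₙₐ[R] Module.End R N where
  toFun f := i ∘ₗ f ∘ₗ p
  map_smul' r f := by simp [LinearMap.smul_comp, LinearMap.comp_smul]
  map_zero' := by simp
  map_add' f g := by simp [LinearMap.add_comp, LinearMap.comp_add]
  map_mul' f g := LinearMap.ext fun x => by simp [h _]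

theorem endOfLeftInverse_injective (i : M →ₗ[R] N) (p : N →ₗ[R] M)
    (h : Function.LeftInverse p i) : Function.Injective (endOfLeftInverse i p h) := by
  intro f g hfg
  ext x
  have : i (f (p (i x))) = i (g (p (i x))) := LinearMap.congr_fun hfg (i x)
  simpa [h _] using h.injective this

end Retraction

namespace PBasis

variable {F : Type*} [Field F] {n : ℕ}

theorem c_injective : Function.Injective (c : Fin n → PBasis n) :=
  fun _ _ => c.inj

theorem mulLin_single_single (u v : PBasis n) (r s : F) :
    mulLin F (Finsupp.single u r) (Finsupp.single v s) = r • s • mulB F u v := by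
  simp [mulLin]

theorem mulLin_c (k : Fin n) : mulLin F (Finsupp.single (c k) 1) = 0 := by
  ext v : 2
  simp [mulLin_single_single, mulB]

theorem mulLin_d (k j : Fin n) (y : Pn F n) :
    mulLin F (Finsupp.single (d k j) 1) y = -y (b k j) • Finsupp.single (c j) 1 := by
  induction y using Finsupp.induction_linear with
  | zero => simp
  | add y y' hy hy' => simp only [map_add, hy, hy', Finsupp.add_apply, neg_add, add_smul]
  | single v s =>
    cases v with
    | b i l =>
      by_cases h : i = k ∧ l = j
      · obtain ⟨rfl, rfl⟩ := h
        simp [mulLin_single_single, mulB]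
      · simp [mulLin_single_single, mulB, h]
    | _ => simp [mulLin_single_single, mulB]

theorem mulLin_e (k j : Fin n) (y : Pn F n) :
    mulLin F (Finsupp.single (e k j) 1) y = y (a k j) • Finsupp.single (c j) 1 := by
  induction y using Finsupp.induction_linear with
  | zero => simp
  | add y y' hy hy' => simp only [map_add, hy, hy', Finsupp.add_apply, add_smul]
  | single v s =>
    cases v with
    | a i l =>
      by_cases h : i = k ∧ l = j
      · obtain ⟨rfl, rfl⟩ := h
        simp [mulLin_single_single, mulB]
      · simp [mulLin_single_single, mulB, h]
    | _ => simp [mulLin_single_single, mulB]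

theorem mulLin_apply_c (x : Pn F n) (k : Fin n) :
    mulLin F x (Finsupp.single (c k) 1) =
      ∑ j, (x (a k j) • Finsupp.single (d k j) 1 + x (b k j) • Finsupp.single (e k j) 1) := by
  induction x using Finsupp.induction_linear with
  | zero => simp
  | add x x' hx hx' =>
    simp only [map_add, LinearMap.add_apply, hx, hx', Finsupp.add_apply, add_smul,
      ← Finset.sum_add_distrib]
    exact Finset.sum_congr rfl fun j _ => add_add_add_comm _ _ _ _
  | single u r =>
    cases u with
    | a i j | b i j =>
      obtain rfl | hk := eq_or_ne k i
      · simp [mulLin_single_single, mulB, Finsupp.single_apply]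
      · simp [mulLin_single_single, mulB, hk]
    | _ => simp [mulLin_single_single, mulB]

theorem mulLin_mulB_of_notMem_range_c (u : PBasis n) {v : PBasis n} (hv : v ∉ Set.range c) :
    mulLin F (mulB F u v) = 0 := by
  cases u <;> cases v <;> simp_all [mulB, apply_ite (mulLin F), mulLin_c]

theorem Vop_apply (x y u : Pn F n) : Vop F x y u = mulLin F (mulLin F x u) y :=
  rfl

theorem Vop_apply_of_notMem_range_c (x y : Pn F n) {u : PBasis n} (hu : u ∉ Set.range c) :
    Vop F x y (Finsupp.single u 1) = 0 := by
  rw [Vop_apply]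
  induction x using Finsupp.induction_linear with
  | zero => simp
  | add x x' hx hx' => simp only [map_add, LinearMap.add_apply, hx, hx', add_zero]
  | single v r => simp [mulLin_single_single, mulLin_mulB_of_notMem_range_c v hu]

/-- The matrix of `Vop F x y` on the span of the `c i`, in the convention where column `k` is the
image of `c k`. -/
def coeffMatrix (x y : Pn F n) : Matrix (Fin n) (Fin n) F :=
  Matrix.of fun j k => x (b k j) * y (a k j) - x (a k j) * y (b k j)

theorem Vop_apply_c (x y : Pn F n) (k : Fin n) :
    Vop F x y (Finsupp.single (c k) 1) = ∑ j, coeffMatrix x y j k • Finsupp.single (c j) 1 := by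
  rw [Vop_apply, mulLin_apply_c, map_sum, LinearMap.sum_apply]
  refine Finset.sum_congr rfl fun j _ => ?_
  simp only [map_add, map_smul, LinearMap.add_apply, LinearMap.smul_apply, mulLin_d, mulLin_e,
    smul_smul, ← add_smul]
  congr 1
  simp only [coeffMatrix, Matrix.of_apply]
  ring

theorem exists_coeffMatrix_eq (M : Matrix (Fin n) (Fin n) F) :
    ∃ x y : Pn F n, coeffMatrix x y = M := by
  refine ⟨∑ i, ∑ j, Finsupp.single (b i j) (M j i), ∑ i, ∑ j, Finsupp.single (a i j) 1, ?_⟩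
  ext j k
  simp [coeffMatrix, Finsupp.finsetSum_apply, Finsupp.single_apply, ite_and]

section MatrixAct

variable (F n)

/-- Matrices acting on the span of the `c i`, extended by zero on the other basis vectors. -/
noncomputable def matrixAct : Matrix (Fin n) (Fin n) F →ₙₐ[F] Module.End F (Pn F n) :=
  (endOfLeftInverse (Finsupp.lmapDomain F F c) (Finsupp.lcomapDomain c c_injective)
    (Finsupp.leftInverse_lcomapDomain_mapDomain c c_injective)).comp
    (Matrix.toLinAlgEquiv (Finsupp.basisSingleOne (R := F) (ι := Fin n))).toAlgHom

theorem matrixAct_injective : Function.Injective (matrixAct F n) :=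
  (endOfLeftInverse_injective _ _ (Finsupp.leftInverse_lcomapDomain_mapDomain c c_injective)).comp
    (Matrix.toLinAlgEquiv Finsupp.basisSingleOne).injective

variable {F n}

theorem matrixAct_apply (M : Matrix (Fin n) (Fin n) F) (u : Pn F n) :
    matrixAct F n M u = Finsupp.lmapDomain F F c
      (Matrix.toLinAlgEquiv Finsupp.basisSingleOne M
        (Finsupp.lcomapDomain (R := F) c c_injective u)) :=
  rfl

theorem matrixAct_apply_c (M : Matrix (Fin n) (Fin n) F) (k : Fin n) :
    matrixAct F n M (Finsupp.single (c k) 1) = ∑ j, M j k • Finsupp.single (c j) 1 := by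
  have toLin_single := Matrix.toLinAlgEquiv_self (Finsupp.basisSingleOne (R := F)) M k
  simp only [Finsupp.coe_basisSingleOne] at toLin_single
  simp [matrixAct_apply, Finsupp.lcomapDomain, toLin_single, Finsupp.mapDomain_single]

theorem matrixAct_apply_of_notMem_range_c (M : Matrix (Fin n) (Fin n) F) {u : PBasis n}
    (hu : u ∉ Set.range c) : matrixAct F n M (Finsupp.single u 1) = 0 := by
  simp [matrixAct_apply, Finsupp.lcomapDomain, hu]

theorem Vop_eq_matrixAct (x y : Pn F n) : Vop F x y = matrixAct F n (coeffMatrix x y) := by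
  refine Finsupp.lhom_ext' fun u => LinearMap.ext_ring ?_
  change Vop F x y (Finsupp.single u 1) = matrixAct F n _ (Finsupp.single u 1)
  by_cases hu : u ∈ Set.range c
  · obtain ⟨k, rfl⟩ := hu
    rw [Vop_apply_c, matrixAct_apply_c]
  · rw [Vop_apply_of_notMem_range_c x y hu, matrixAct_apply_of_notMem_range_c _ hu]

variable (F n)

theorem setOf_Vop_eq_range_matrixAct :
    {w : Module.End F (Pn F n) | ∃ x y : Pn F n, w = Vop F x y} =
      (NonUnitalAlgHom.range (matrixAct F n) : Set (Module.End F (Pn F n))) := by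
  ext w
  constructor
  · rintro ⟨x, y, rfl⟩
    exact ⟨coeffMatrix x y, (Vop_eq_matrixAct x y).symm⟩
  · rintro ⟨M, rfl⟩
    obtain ⟨x, y, rfl⟩ := exists_coeffMatrix_eq M
    exact ⟨x, y, (Vop_eq_matrixAct x y).symm⟩

end MatrixAct

end PBasis

theorem stmt (F : Type*) [Field F] (n : ℕ) :
    ∃ f : (NonUnitalAlgebra.adjoin F
        {w : Module.End F (Pn F n) | ∃ x y : Pn F n, w = Vop F x y})
        →ₙₐ[F] Matrix (Fin n) (Fin n) F,
      Function.Bijective f := by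
  rw [PBasis.setOf_Vop_eq_range_matrixAct, NonUnitalAlgebra.adjoin_eq]
  exact ⟨nonUnitalRangeInverse _ (PBasis.matrixAct_injective F n),
    nonUnitalRangeInverse_bijective _ _⟩
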